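/- arXiv:2303.06778 — 6 statements merged into one kernel-verified Lean document; each statement's English description precedes it below -/
import Mathlib

section
/- Let n ≥ 1, let Λ ⊂ ℝⁿ be a Lebesgue measurable set with finite Lebesgue measure, let V ∈ L¹(Λ, ℝ), and let (J_d)_{d∈ℕ} ⊂ L¹(Λ, ℝ) be a family of functions such that (i) for every d and every x ∈ Λ, V(x) ≤ J_d(x), and (ii) ∫_Λ |V(x) − J_d(x)| dx → 0 as d → ∞. Then for every γ ∈ ℝ, D_V({x ∈ Λ : J_d(x) < γ}, {x ∈ Λ : V(x) < γ}) → 0 as d → ∞. -/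
open Filter MeasureTheory

/-!
Where `V < γ ≤ J d`, either `V` lies in the thin layer `(c, γ)` just below the level, or `J d` and
`V` differ by at least `γ - c`. The first event has small measure for `c` close to `γ` by continuity
from above, the second one for `d` large by Markov's inequality. The other half of the symmetric
difference, where `J d < γ ≤ V`, is null because `V ≤ J d`.
-/

open Set
open scoped Topology ENNReal symmDiff

section

variable {α ι : Type*} {mα : MeasurableSpace α} {μ : Measure α} {l : Filter ι}

theorem tendsto_measure_preimage_Ioo_nhdsLT {β : Type*} [LinearOrder β] [TopologicalSpace β]
    [OrderTopology β] [FirstCountableTopology β] [MeasurableSpace β] [OpensMeasurableSpace β]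
    {g : α → β} (hg : AEMeasurable g μ) {γ : β} (hfin : ∃ c < γ, μ (g ⁻¹' Ioo c γ) ≠ ∞) :
    Tendsto (fun c ↦ μ (g ⁻¹' Ioo c γ)) (𝓝[<] γ) (𝓝 0) := by
  have hempty : ⋂ c < γ, g ⁻¹' Ioo c γ = ∅ := by
    refine eq_empty_of_forall_notMem fun x hx ↦ ?_
    rw [mem_iInter₂] at hx
    obtain ⟨c, hc, -⟩ := hfin
    exact lt_irrefl (g x) (hx (g x) (hx c hc).2).1
  rw [← measure_empty (μ := μ), ← hempty]
  exact tendsto_measure_biInter_gt (ι := βᵒᵈ) (a := OrderDual.toDual γ)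
    (fun c _ ↦ hg.nullMeasurable measurableSet_Ioo)
    (fun c c' _ hcc' ↦ preimage_mono (Ioo_subset_Ioo_left hcc')) hfin

theorem preimage_Iio_sdiff_preimage_Iio_subset (f g : α → ℝ) (c γ : ℝ) :
    g ⁻¹' Iio γ \ f ⁻¹' Iio γ ⊆ g ⁻¹' Ioo c γ ∪ {x | γ - c ≤ dist (f x) (g x)} := by
  rintro x ⟨hgx : g x < γ, hfx : ¬f x < γ⟩
  rcases lt_or_ge c (g x) with hc | hc
  · exact .inl ⟨hc, hgx⟩
  · exact .inr <| calc
      γ - c ≤ f x - g x := sub_le_sub (not_lt.1 hfx) hc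
      _ ≤ dist (f x) (g x) := le_abs_self _

theorem measure_symmDiff_preimage_Iio_of_ae_le {β : Type*} [Preorder β] {f g : α → β}
    (hgf : g ≤ᵐ[μ] f) (γ : β) :
    μ ((f ⁻¹' Iio γ) ∆ (g ⁻¹' Iio γ)) = μ (g ⁻¹' Iio γ \ f ⁻¹' Iio γ) := by
  have hsub : f ⁻¹' Iio γ ≤ᵐ[μ] g ⁻¹' Iio γ := hgf.mono fun _ hx ↦ hx.trans_lt
  exact measure_congr (union_ae_eq_right.2 (measure_mono_null sdiff_subset (ae_le_set.1 hsub)))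

section TendstoInMeasure

variable {f : ι → α → ℝ} {g : α → ℝ} {γ : ℝ}

theorem tendsto_measure_preimage_Iio_sdiff (hg : AEMeasurable g μ) (hfg : TendstoInMeasure μ f l g)
    (hfin : ∃ c < γ, μ (g ⁻¹' Ioo c γ) ≠ ∞) :
    Tendsto (fun i ↦ μ (g ⁻¹' Iio γ \ f i ⁻¹' Iio γ)) l (𝓝 0) := by
  rw [ENNReal.tendsto_nhds_zero]
  intro ε hε
  have hε2 : 0 < ε / 2 := ENNReal.half_pos hε.ne'
  obtain ⟨c, hlayer, hc⟩ : ∃ c, μ (g ⁻¹' Ioo c γ) ≤ ε / 2 ∧ c < γ :=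
    (((tendsto_measure_preimage_Ioo_nhdsLT hg hfin).eventually_le_const hε2).and
      self_mem_nhdsWithin).exists
  have hdist := tendstoInMeasure_iff_dist.1 hfg (γ - c) (sub_pos.2 hc)
  filter_upwards [hdist.eventually_le_const hε2] with i hi
  calc μ (g ⁻¹' Iio γ \ f i ⁻¹' Iio γ)
      ≤ μ (g ⁻¹' Ioo c γ ∪ {x | γ - c ≤ dist (f i x) (g x)}) :=
        measure_mono (preimage_Iio_sdiff_preimage_Iio_subset (f i) g c γ)
    _ ≤ ε / 2 + ε / 2 := (measure_union_le _ _).trans (add_le_add hlayer hi)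
    _ = ε := ENNReal.add_halves ε

theorem tendsto_measure_symmDiff_preimage_Iio (hg : AEMeasurable g μ)
    (hfg : TendstoInMeasure μ f l g) (hgf : ∀ᶠ i in l, g ≤ᵐ[μ] f i)
    (hfin : ∃ c < γ, μ (g ⁻¹' Ioo c γ) ≠ ∞) :
    Tendsto (fun i ↦ μ ((f i ⁻¹' Iio γ) ∆ (g ⁻¹' Iio γ))) l (𝓝 0) :=
  (tendsto_measure_preimage_Iio_sdiff hg hfg hfin).congr' <|
    hgf.mono fun _ hi ↦ (measure_symmDiff_preimage_Iio_of_ae_le hi γ).symm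

end TendstoInMeasure

theorem tendstoInMeasure_of_tendsto_integral_norm_sub {E : Type*} [NormedAddCommGroup E]
    {f : ι → α → E} {g : α → E} (hf : ∀ i, Integrable (f i) μ) (hg : Integrable g μ)
    (hfg : Tendsto (fun i ↦ ∫ x, ‖f i x - g x‖ ∂μ) l (𝓝 0)) :
    TendstoInMeasure μ f l g := by
  refine tendstoInMeasure_of_tendsto_eLpNorm one_ne_zero
    (fun i ↦ (hf i).aestronglyMeasurable) hg.aestronglyMeasurable ?_
  have heLpNorm (i : ι) : ENNReal.ofReal (∫ x, ‖f i x - g x‖ ∂μ) = eLpNorm (f i - g) 1 μ := by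
    rw [eLpNorm_one_eq_lintegral_enorm]
    exact ofReal_integral_norm_eq_lintegral_enorm ((hf i).sub hg)
  simpa only [heLpNorm, ENNReal.ofReal_zero] using ENNReal.tendsto_ofReal hfg

theorem exists_lt_measure_preimage_Ioo_ne_top {g : α → ℝ} (hg : Integrable g μ) {γ : ℝ}
    (hγ : γ ≠ 0 ∨ μ univ ≠ ∞) : ∃ c < γ, μ (g ⁻¹' Ioo c γ) ≠ ∞ := by
  rcases hγ with hγ | hμ
  · rcases hγ.lt_or_gt with hneg | hpos
    · exact ⟨γ - 1, sub_one_lt γ,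
        measure_ne_top_of_subset (fun _ hx ↦ hx.2) (hg.measure_lt_lt_top hneg).ne⟩
    · exact ⟨γ / 2, half_lt_self hpos,
        measure_ne_top_of_subset (fun _ hx ↦ hx.1) (hg.measure_gt_lt_top (half_pos hpos)).ne⟩
  · exact ⟨γ - 1, sub_one_lt γ, measure_ne_top_of_subset (subset_univ _) hμ⟩

theorem statement_1_general {V : α → ℝ} (hV : Integrable V μ) {J : ι → α → ℝ}
    (hJ : ∀ d, Integrable (J d) μ) (hVJ : ∀ᶠ d in l, V ≤ᵐ[μ] J d)
    (hlim : Tendsto (fun d ↦ ∫ x, |V x - J d x| ∂μ) l (𝓝 0))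
    {γ : ℝ} (hγ : γ ≠ 0 ∨ μ univ ≠ ∞) :
    Tendsto (fun d ↦ μ ({x | J d x < γ} ∆ {x | V x < γ})) l (𝓝 0) := by
  have hmeas : TendstoInMeasure μ J l V :=
    tendstoInMeasure_of_tendsto_integral_norm_sub hJ hV <| by
      simpa only [Real.norm_eq_abs, abs_sub_comm] using hlim
  exact tendsto_measure_symmDiff_preimage_Iio hV.aemeasurable hmeas hVJ
    (exists_lt_measure_preimage_Ioo_ne_top hV hγ)

end

/-- If `V ≤ J d` on a finite-measure measurable set `Λ`, all functions are
in `L¹(Λ)`, and `∫_Λ |V - J d| → 0`, then the strict `γ`-sublevel sets of `J d` on `Λ`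
converge to the strict `γ`-sublevel set of `V` on `Λ` in the volume metric
(the Lebesgue measure of the symmetric difference). -/
theorem statement_1 (n : ℕ) (hn : 1 ≤ n)
    (Λ : Set (EuclideanSpace ℝ (Fin n))) (hΛ : MeasurableSet Λ)
    (hfin : volume Λ < ⊤)
    (V : EuclideanSpace ℝ (Fin n) → ℝ) (hV : IntegrableOn V Λ)
    (J : ℕ → EuclideanSpace ℝ (Fin n) → ℝ) (hJ : ∀ d : ℕ, IntegrableOn (J d) Λ)
    (h1 : ∀ d : ℕ, ∀ x ∈ Λ, V x ≤ J d x)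
    (h2 : Tendsto (fun d : ℕ => ∫ x in Λ, |V x - J d x|) atTop (nhds 0))
    (γ : ℝ) :
    Tendsto (fun d : ℕ =>
        volume (({x ∈ Λ | J d x < γ} \ {x ∈ Λ | V x < γ}) ∪
                ({x ∈ Λ | V x < γ} \ {x ∈ Λ | J d x < γ})))
      atTop (nhds 0) := by
  have hlim := statement_1_general (γ := γ) hV hJ
    (.of_forall fun d ↦ ae_restrict_of_forall_mem hΛ (h1 d)) h2 (.inr (by simpa using hfin.ne))
  simpa only [Measure.restrict_apply' hΛ, inter_comm _ Λ, inter_symmDiff_distrib_left] using! hlim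
end

section
/- Let n, m ≥ 1, let Λ ⊂ ℝⁿ be a compact set, let r > 0, let g₁, …, g_m : ℝⁿ → ℝ be polynomial functions, and set V(x) := min_{1 ≤ i ≤ m} g_i(x). Then for every ε > 0 there exist polynomial functions H₁, H₂ : ℝⁿ → ℝ such that: sup_{x∈Λ} |V(x) − H_j(x)| < ε for j ∈ {1,2}; H₁(x) < g_i(x) for every x with ‖x‖₂ < r and every 1 ≤ i ≤ m; and H₂(x) > g_i(x) for every 1 ≤ i ≤ m and every x with ‖x‖₂ < r satisfying x ∈ Y_i, where Y_i := {y ∈ Λ : g_i(y) ≤ g_j(y) for all 1 ≤ j ≤ m}. -/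
/-- A function `ℝⁿ → ℝ` is a polynomial function if it is the evaluation map of some
multivariate polynomial `P ∈ ℝ[x₁,…,xₙ]`. -/
def IsPolynomialFun {n : ℕ} (p : EuclideanSpace ℝ (Fin n) → ℝ) : Prop :=
  ∃ P : MvPolynomial (Fin n) ℝ, ∀ x, p x = MvPolynomial.eval (fun i => x i) P

/-!
Between two continuous functions `a < b` on a compact set `K ⊆ ℝⁿ` there is always a polynomial
function: `b - a` is bounded below on `K` by some `δ > 0`, and by the Stone-Weierstrass theorem
some polynomial is within `δ / 2` of the midpoint `(a + b) / 2`. Inserting polynomials between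
`V - ε / 2` and `V`, and between `V` and `V + ε / 2`, on the union of `Λ` and the closed ball gives
`H₁` and `H₂`, because `V ≤ g i` everywhere and `V = g i` on `Y_i`.
-/

section StoneWeierstrass

variable {X σ R : Type*} [TopologicalSpace X]
  [CommSemiring R] [TopologicalSpace R] [IsTopologicalSemiring R]

theorem mvPolynomial_aeval_continuousMap_apply (c : σ → C(X, R)) (P : MvPolynomial σ R) (x : X) :
    MvPolynomial.aeval c P x = MvPolynomial.eval (fun i ↦ c i x) P :=
  MvPolynomial.comp_aeval_apply c (ContinuousMap.evalAlgHom R R x) P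

theorem separatesPoints_range_mvPolynomial_aeval {c : σ → C(X, R)}
    (hc : Pairwise fun x y ↦ ∃ i, c i x ≠ c i y) :
    (MvPolynomial.aeval (R := R) c).range.SeparatesPoints := by
  intro x y hxy
  obtain ⟨i, hi⟩ := hc hxy
  exact ⟨c i, ⟨c i, ⟨MvPolynomial.X i, MvPolynomial.aeval_X c i⟩, rfl⟩, hi⟩

theorem exists_mvPolynomial_eval_near [CompactSpace X] {c : σ → C(X, ℝ)}
    (hc : Pairwise fun x y ↦ ∃ i, c i x ≠ c i y) {f : X → ℝ} (hf : Continuous f)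
    {ε : ℝ} (hε : 0 < ε) :
    ∃ P : MvPolynomial σ ℝ, ∀ x, |MvPolynomial.eval (fun i ↦ c i x) P - f x| < ε := by
  obtain ⟨⟨_, P, rfl⟩, hP⟩ :=
    ContinuousMap.exists_mem_subalgebra_near_continuous_of_separatesPoints _
      (separatesPoints_range_mvPolynomial_aeval hc) f hf ε hε
  exact ⟨P, fun x ↦ mvPolynomial_aeval_continuousMap_apply c P x ▸ hP x⟩

end StoneWeierstrass

section PolynomialFun

variable {n : ℕ} {K : Set (EuclideanSpace ℝ (Fin n))}

theorem IsPolynomialFun.continuous {p : EuclideanSpace ℝ (Fin n) → ℝ} (hp : IsPolynomialFun p) :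
    Continuous p := by
  obtain ⟨P, hP⟩ := hp
  rw [funext hP]
  exact P.continuous_eval.comp (by fun_prop)

theorem exists_isPolynomialFun_near (hK : IsCompact K) {f : EuclideanSpace ℝ (Fin n) → ℝ}
    (hf : ContinuousOn f K) {ε : ℝ} (hε : 0 < ε) :
    ∃ p, IsPolynomialFun p ∧ ∀ x ∈ K, |p x - f x| < ε := by
  have : CompactSpace K := isCompact_iff_compactSpace.mp hK
  let coord (i : Fin n) : C(K, ℝ) := ⟨fun x ↦ x.1 i, by fun_prop⟩
  have coord_separates : Pairwise fun x y ↦ ∃ i, coord i x ≠ coord i y := by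
    intro x y hxy
    by_contra! h
    exact hxy (Subtype.ext (PiLp.ext h))
  obtain ⟨P, hP⟩ := exists_mvPolynomial_eval_near coord_separates hf.domRestrict hε
  exact ⟨fun x ↦ MvPolynomial.eval (fun i ↦ x i) P, ⟨P, fun _ ↦ rfl⟩, fun x hx ↦ hP ⟨x, hx⟩⟩

theorem exists_isPolynomialFun_between (hK : IsCompact K) {a b : EuclideanSpace ℝ (Fin n) → ℝ}
    (ha : ContinuousOn a K) (hb : ContinuousOn b K) (hab : ∀ x ∈ K, a x < b x) :
    ∃ p, IsPolynomialFun p ∧ ∀ x ∈ K, a x < p x ∧ p x < b x := by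
  obtain ⟨δ, hδ, hgap⟩ : ∃ δ, 0 < δ ∧ ∀ x ∈ K, δ ≤ b x - a x :=
    hK.exists_forall_le' (hb.sub ha) fun x hx ↦ sub_pos.mpr (hab x hx)
  obtain ⟨p, hp, hnear⟩ :=
    exists_isPolynomialFun_near hK ((ha.add hb).div_const 2) (half_pos hδ)
  refine ⟨p, hp, fun x hx ↦ ?_⟩
  obtain ⟨hlower, hupper⟩ : -(δ / 2) < p x - (a x + b x) / 2 ∧ p x - (a x + b x) / 2 < δ / 2 :=
    abs_lt.mp (hnear x hx)
  have := hgap x hx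
  constructor <;> linarith

end PolynomialFun

-- At points outside `s` the inner supremum is the junk value `sSup ∅ = 0`.
theorem real_biSup_le {X : Type*} {s : Set X} {f : X → ℝ} {δ : ℝ} (hδ : 0 ≤ δ)
    (hf : ∀ x ∈ s, f x ≤ δ) : ⨆ x ∈ s, f x ≤ δ :=
  Real.iSup_le (fun x ↦ Real.iSup_le (hf x) hδ) hδ

theorem statement_7_general {n : ℕ} {ι : Type*} [Fintype ι] [Nonempty ι]
    {Λ K : Set (EuclideanSpace ℝ (Fin n))} (hΛ : IsCompact Λ) (hK : IsCompact K)
    {g : ι → EuclideanSpace ℝ (Fin n) → ℝ} (hg : ∀ i, ContinuousOn (g i) (Λ ∪ K))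
    {V : EuclideanSpace ℝ (Fin n) → ℝ}
    (hV : ∀ x, V x = Finset.univ.inf' Finset.univ_nonempty (fun i ↦ g i x))
    {ε : ℝ} (hε : 0 < ε) :
    ∃ H₁ H₂ : EuclideanSpace ℝ (Fin n) → ℝ,
      IsPolynomialFun H₁ ∧ IsPolynomialFun H₂ ∧
      (⨆ x ∈ Λ, |V x - H₁ x|) < ε ∧ (⨆ x ∈ Λ, |V x - H₂ x|) < ε ∧
      (∀ x ∈ K, ∀ i, H₁ x < g i x) ∧
      (∀ i, ∀ x ∈ {y ∈ Λ | ∀ j, g i y ≤ g j y}, g i x < H₂ x) := by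
  have hV_cont : ContinuousOn V (Λ ∪ K) := by
    rw [funext hV]
    exact ContinuousOn.finset_inf'_apply _ fun i _ ↦ hg i
  have V_le (i x) : V x ≤ g i x := hV x ▸ Finset.inf'_le _ (Finset.mem_univ i)
  have le_V {i x} (hi : ∀ j, g i x ≤ g j x) : g i x ≤ V x :=
    hV x ▸ Finset.le_inf' _ _ fun j _ ↦ hi j
  obtain ⟨H₁, hH₁, hH₁V⟩ :
      ∃ H₁, IsPolynomialFun H₁ ∧ ∀ x ∈ Λ ∪ K, V x - ε / 2 < H₁ x ∧ H₁ x < V x :=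
    exists_isPolynomialFun_between (hΛ.union hK) (hV_cont.sub continuousOn_const) hV_cont
      fun x _ ↦ sub_lt_self (V x) (half_pos hε)
  obtain ⟨H₂, hH₂, hVH₂⟩ :
      ∃ H₂, IsPolynomialFun H₂ ∧ ∀ x ∈ Λ ∪ K, V x < H₂ x ∧ H₂ x < V x + ε / 2 :=
    exists_isPolynomialFun_between (hΛ.union hK) hV_cont (hV_cont.add continuousOn_const)
      fun x _ ↦ lt_add_of_pos_right (V x) (half_pos hε)
  have iSup_lt {H : EuclideanSpace ℝ (Fin n) → ℝ} (hH : ∀ x ∈ Λ, |V x - H x| ≤ ε / 2) :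
      ⨆ x ∈ Λ, |V x - H x| < ε :=
    (real_biSup_le (half_pos hε).le hH).trans_lt (half_lt_self hε)
  refine ⟨H₁, H₂, hH₁, hH₂, iSup_lt fun x hx ↦ ?_, iSup_lt fun x hx ↦ ?_,
    fun x hx i ↦ (hH₁V x (.inr hx)).2.trans_le (V_le i x),
    fun i x hx ↦ (le_V hx.2).trans_lt (hVH₂ x (.inl hx.1)).1⟩
  · obtain ⟨hlower, hupper⟩ := hH₁V x (.inl hx)
    exact abs_le.mpr ⟨by linarith, by linarith⟩
  · obtain ⟨hlower, hupper⟩ := hVH₂ x (.inl hx)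
    exact abs_le.mpr ⟨by linarith, by linarith⟩

/-- The pointwise minimum `V` of finitely many polynomial functions can be
approximated uniformly on a compact set `Λ` by polynomial functions `H₁, H₂`, with
`H₁ < g i` on the open ball `B_r(0)` for every `i`, and `H₂ > g i` on
`B_r(0) ∩ Y_i`, where `Y_i = {y ∈ Λ | ∀ j, g i y ≤ g j y}`. -/
theorem statement_7 (n m : ℕ) (hn : 1 ≤ n) (hm : 1 ≤ m)
    (Λ : Set (EuclideanSpace ℝ (Fin n))) (hΛ : IsCompact Λ)
    (r : ℝ) (hr : 0 < r)
    (g : Fin m → EuclideanSpace ℝ (Fin n) → ℝ)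
    (hg : ∀ i, IsPolynomialFun (g i))
    (V : EuclideanSpace ℝ (Fin n) → ℝ)
    (hV : ∀ x, V x = Finset.univ.inf'
      (Finset.univ_nonempty_iff.mpr ⟨⟨0, hm⟩⟩) (fun i => g i x))
    (ε : ℝ) (hε : 0 < ε) :
    ∃ H₁ H₂ : EuclideanSpace ℝ (Fin n) → ℝ,
      IsPolynomialFun H₁ ∧ IsPolynomialFun H₂ ∧
      (⨆ x ∈ Λ, |V x - H₁ x|) < ε ∧ (⨆ x ∈ Λ, |V x - H₂ x|) < ε ∧
      (∀ x, ‖x‖ < r → ∀ i : Fin m, H₁ x < g i x) ∧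
      (∀ i : Fin m, ∀ x, ‖x‖ < r →
        x ∈ {y ∈ Λ | ∀ j : Fin m, g i y ≤ g j y} → g i x < H₂ x) := by
  have : Nonempty (Fin m) := ⟨⟨0, hm⟩⟩
  obtain ⟨H₁, H₂, hH₁, hH₂, hV₁, hV₂, hlower, hupper⟩ := statement_7_general hΛ
    (isCompact_closedBall 0 r) (fun i ↦ (hg i).continuous.continuousOn) hV hε
  exact ⟨H₁, H₂, hH₁, hH₂, hV₁, hV₂, fun x hx ↦ hlower x (mem_closedBall_zero_iff.mpr hx.le),
    fun i x _ ↦ hupper i x⟩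
end

section
/- Let n ≥ 1, let Λ ⊂ ℝⁿ be a compact set, let N ≥ 1, and let x₁, …, x_N ∈ Λ be finitely many points. Define V : ℝⁿ → ℝ by V(x) = 1 − 𝟙_{{x₁,…,x_N}}(x) (so V(x) = 0 if x ∈ {x₁,…,x_N} and V(x) = 1 otherwise). Then for every ε > 0 there exists a polynomial function H : ℝⁿ → ℝ such that ∫_Λ |H(x) − V(x)| dx < ε (integral with respect to Lebesgue measure), H(x_i) < 0 for every 1 ≤ i ≤ N, and H(x) < 1 for every x ∈ Λ. -/
open MeasureTheory

/-! Compose `q(x) = ∏ a, ‖x - a‖²`, the product running over the given points, with the univariate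
polynomial `1 - 2 (1 - t² / (M² + 1)) ^ k`, where `M` bounds `q` on `Λ`. The base of the power lies
in `(0, 1]` on `Λ` and equals `1` only at the given points, which form a null set. Hence the
composite is less than `1` on `Λ`, equals `-1` at the points, and tends to `1` in `L¹(Λ)` as
`k → ∞` by dominated convergence. The argument applies to any polynomial `q` with null zero set. -/

open Filter Topology

namespace IsPolynomialFun

variable {n : ℕ} {q : EuclideanSpace ℝ (Fin n) → ℝ}

theorem continuous_s11 (hq : IsPolynomialFun q) : Continuous q := by
  obtain ⟨Q, hQ⟩ := hq
  rw [funext hQ]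
  exact Q.continuous_eval.comp (by fun_prop)

theorem polynomial_eval_comp (hq : IsPolynomialFun q) (P : Polynomial ℝ) :
    IsPolynomialFun fun x => P.eval (q x) := by
  obtain ⟨Q, hQ⟩ := hq
  refine ⟨Polynomial.aeval Q P, fun x => ?_⟩
  simp only [hQ, ← MvPolynomial.coe_aeval_eq_eval, RingHom.coe_coe,
    ← Polynomial.aeval_algHom_apply, Polynomial.coe_aeval_eq_eval]

theorem exists_abs_le_on_closure (hq : IsPolynomialFun q)
    {Λ : Set (EuclideanSpace ℝ (Fin n))} (hΛ : Bornology.IsBounded Λ) :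
    ∃ M, ∀ x ∈ closure Λ, |q x| ≤ M :=
  hΛ.isCompact_closure.exists_bound_of_continuousOn hq.continuous_s11.continuousOn

end IsPolynomialFun

theorem exists_isPolynomialFun_eq_zero_iff_mem {n : ℕ} {Z : Set (EuclideanSpace ℝ (Fin n))}
    (hZ : Z.Finite) : ∃ q, IsPolynomialFun q ∧ ∀ x, q x = 0 ↔ x ∈ Z := by
  refine ⟨fun x => ∏ a ∈ hZ.toFinset, dist x a ^ 2,
    ⟨∏ a ∈ hZ.toFinset, ∑ i, (MvPolynomial.X i - MvPolynomial.C (a i)) ^ 2, fun x => ?_⟩,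
    fun x => ?_⟩
  · simp [EuclideanSpace.dist_sq_eq, Real.dist_eq]
  · simp [Finset.prod_eq_zero_iff]

theorem tendsto_integral_pow_atTop_nhds_zero {α : Type*} [MeasurableSpace α] {μ : Measure α}
    [IsFiniteMeasure μ] {u : α → ℝ} (hu : AEStronglyMeasurable u μ)
    (hu_lt : ∀ᵐ x ∂μ, |u x| < 1) :
    Tendsto (fun k : ℕ => ∫ x, u x ^ k ∂μ) atTop (𝓝 0) := by
  rw [← integral_zero α ℝ (μ := μ)]
  refine tendsto_integral_of_dominated_convergence (fun _ => 1) (fun k => hu.pow k)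
    (integrable_const 1) (fun k => ?_) ?_
  · filter_upwards [hu_lt] with x hx
    simpa only [norm_pow, Real.norm_eq_abs] using pow_le_one₀ (abs_nonneg _) hx.le
  · filter_upwards [hu_lt] with x hx
    exact tendsto_pow_atTop_nhds_zero_of_abs_lt_one hx

/-- The polynomial `1 - 2 (1 - t² / (M² + 1)) ^ k`: it dips to `-1` at `0` and, on `[-M, M]` away
from `0`, increases to `1` as `k → ∞`. The denominator `M² + 1` keeps the base of the power
strictly positive on `[-M, M]`, including when `M = 0`. -/
noncomputable def dipPolynomial (M : ℝ) (k : ℕ) : Polynomial ℝ :=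
  1 - 2 * (1 - Polynomial.C (M ^ 2 + 1)⁻¹ * Polynomial.X ^ 2) ^ k

namespace dipPolynomial

theorem eval_eq (M : ℝ) (k : ℕ) (t : ℝ) :
    (dipPolynomial M k).eval t = 1 - 2 * (1 - t ^ 2 / (M ^ 2 + 1)) ^ k := by
  simp [dipPolynomial, div_eq_inv_mul]

theorem eval_zero (M : ℝ) (k : ℕ) : (dipPolynomial M k).eval 0 = -1 := by
  rw [eval_eq]
  norm_num

theorem base_pos {M t : ℝ} (ht : |t| ≤ M) : 0 < 1 - t ^ 2 / (M ^ 2 + 1) := by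
  rw [sub_pos, div_lt_one (by positivity)]
  exact (sq_le_sq' (abs_le.mp ht).1 (abs_le.mp ht).2).trans_lt (lt_add_one _)

theorem base_lt_one (M : ℝ) {t : ℝ} (ht : t ≠ 0) : 1 - t ^ 2 / (M ^ 2 + 1) < 1 :=
  sub_lt_self 1 (by positivity)

theorem eval_lt_one {M t : ℝ} (ht : |t| ≤ M) (k : ℕ) : (dipPolynomial M k).eval t < 1 := by
  rw [eval_eq]
  exact sub_lt_self 1 (mul_pos two_pos (pow_pos (base_pos ht) k))

theorem abs_eval_sub_one {M t : ℝ} (ht : |t| ≤ M) (k : ℕ) :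
    |(dipPolynomial M k).eval t - 1| = 2 * (1 - t ^ 2 / (M ^ 2 + 1)) ^ k := by
  rw [abs_sub_comm, abs_of_pos (sub_pos.mpr (eval_lt_one ht k)), eval_eq, sub_sub_cancel]

theorem tendsto_integral_abs_eval_sub_one {α : Type*} [MeasurableSpace α] {μ : Measure α}
    [IsFiniteMeasure μ] {f : α → ℝ} {M : ℝ} (hf : AEStronglyMeasurable f μ)
    (hfM : ∀ᵐ x ∂μ, |f x| ≤ M) (hf0 : ∀ᵐ x ∂μ, f x ≠ 0) :
    Tendsto (fun k => ∫ x, |(dipPolynomial M k).eval (f x) - 1| ∂μ) atTop (𝓝 0) := by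
  have base_meas : AEStronglyMeasurable (fun x => 1 - f x ^ 2 / (M ^ 2 + 1)) μ :=
    (by fun_prop : Continuous fun t : ℝ => 1 - t ^ 2 / (M ^ 2 + 1)).comp_aestronglyMeasurable hf
  have abs_base_lt : ∀ᵐ x ∂μ, |1 - f x ^ 2 / (M ^ 2 + 1)| < 1 := by
    filter_upwards [hfM, hf0] with x hxM hx0
    exact (abs_of_pos (base_pos hxM)).trans_lt (base_lt_one M hx0)
  have integral_eq (k : ℕ) : ∫ x, |(dipPolynomial M k).eval (f x) - 1| ∂μ =
      2 * ∫ x, (1 - f x ^ 2 / (M ^ 2 + 1)) ^ k ∂μ := by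
    rw [← integral_const_mul]
    exact integral_congr_ae (hfM.mono fun x hx => abs_eval_sub_one hx k)
  simpa only [integral_eq, mul_zero] using
    (tendsto_integral_pow_atTop_nhds_zero base_meas abs_base_lt).const_mul 2

end dipPolynomial

theorem statement_11_general {n : ℕ} {μ : Measure (EuclideanSpace ℝ (Fin n))}
    [IsFiniteMeasureOnCompacts μ] {Λ Z : Set (EuclideanSpace ℝ (Fin n))}
    (hΛ : Bornology.IsBounded Λ) {q : EuclideanSpace ℝ (Fin n) → ℝ} (hq : IsPolynomialFun q)
    (hqZ : ∀ x, q x = 0 ↔ x ∈ Z) (hZ : μ (Λ ∩ Z) = 0) {ε : ℝ} (hε : 0 < ε) :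
    ∃ H : EuclideanSpace ℝ (Fin n) → ℝ, IsPolynomialFun H ∧
      (∫ x in Λ, |H x - (1 - Z.indicator (fun _ => (1 : ℝ)) x)| ∂μ) < ε ∧
      (∀ x ∈ Z, H x < 0) ∧
      (∀ x ∈ Λ, H x < 1) := by
  obtain ⟨M, hM⟩ := hq.exists_abs_le_on_closure hΛ
  have : IsFiniteMeasure (μ.restrict Λ) := isFiniteMeasure_restrict.mpr hΛ.measure_lt_top.ne
  have ae_abs_le : ∀ᵐ x ∂μ.restrict Λ, |q x| ≤ M :=
    ae_restrict_of_ae_restrict_of_subset subset_closure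
      (ae_restrict_of_forall_mem measurableSet_closure hM)
  have ae_notMem : ∀ᵐ x ∂μ.restrict Λ, x ∉ Z := by
    have Z_meas : MeasurableSet Z := by
      simpa only [Set.preimage, Set.mem_singleton_iff, hqZ, Set.ofPred_mem_eq] using
        hq.continuous_s11.measurable (measurableSet_singleton 0)
    rwa [← measure_eq_zero_iff_ae_notMem, Measure.restrict_apply Z_meas, Set.inter_comm]
  obtain ⟨k, hk⟩ := ((dipPolynomial.tendsto_integral_abs_eval_sub_one
    hq.continuous_s11.aestronglyMeasurable ae_abs_le
    (ae_notMem.mono fun x => mt (hqZ x).mp)).eventually_lt_const hε).exists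
  refine ⟨fun x => (dipPolynomial M k).eval (q x), hq.polynomial_eval_comp _, ?_, fun x hx => ?_,
    fun x hx => dipPolynomial.eval_lt_one (hM x (subset_closure hx)) k⟩
  · refine (integral_congr_ae (ae_notMem.mono fun x hx => ?_)).trans_lt hk
    simp only [Set.indicator_of_notMem hx, sub_zero]
  · simp only [(hqZ x).mpr hx, dipPolynomial.eval_zero, neg_one_lt_zero]

/-- For finitely many points `x₁, …, x_N` in a compact set `Λ ⊂ ℝⁿ` and
`V = 1 - 𝟙_{{x₁,…,x_N}}`, for every `ε > 0` there is a polynomial function `H` with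
`∫_Λ |H - V| < ε`, `H (x i) < 0` for all `i`, and `H < 1` on `Λ`. -/
theorem statement_11 (n N : ℕ) (hn : 1 ≤ n) (hN : 1 ≤ N)
    (Λ : Set (EuclideanSpace ℝ (Fin n))) (hΛ : IsCompact Λ)
    (p : Fin N → EuclideanSpace ℝ (Fin n)) (hp : ∀ i, p i ∈ Λ)
    (V : EuclideanSpace ℝ (Fin n) → ℝ)
    (hV : ∀ x, V x = 1 - Set.indicator (Set.range p) (fun _ => (1 : ℝ)) x)
    (ε : ℝ) (hε : 0 < ε) :
    ∃ H : EuclideanSpace ℝ (Fin n) → ℝ, IsPolynomialFun H ∧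
      (∫ x in Λ, |H x - V x|) < ε ∧
      (∀ i : Fin N, H (p i) < 0) ∧
      (∀ x ∈ Λ, H x < 1) := by
  have : NeZero n := ⟨Nat.one_le_iff_ne_zero.mp hn⟩
  obtain ⟨q, hq, hqZ⟩ := exists_isPolynomialFun_eq_zero_iff_mem (Set.finite_range p)
  simpa only [hV, Set.forall_mem_range] using statement_11_general hΛ.isBounded hq hqZ
    (measure_mono_null Set.inter_subset_right ((Set.finite_range p).measure_zero volume)) hε
end

section
/- Let Λ = [−10, 10] ⊂ ℝ, let V : ℝ → ℝ be V(x) = 1 − 𝟙_{[1,2]}(x), and for each integer d ≥ 1 let J_d(x) = 1 − 𝟙_{[1,2]}(x) − 1/d. Then: (i) J_d(x) ≤ V(x) for all x ∈ Λ and all d ≥ 1; (ii) sup_{x∈Λ} |V(x) − J_d(x)| = 1/d, which tends to 0 as d → ∞; (iii) {x ∈ Λ : V(x) < 1} = [1,2] and {x ∈ Λ : J_d(x) < 1} = [−10,10] for every d ≥ 1; and (iv) the Hausdorff distance D_H({x ∈ Λ : J_d(x) < 1}, {x ∈ Λ : V(x) < 1}) = 11 for every d ≥ 1, so it does not tend to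 0. (This shows the hypothesis of approximation from above in the Hausdorff sublevel-set convergence theorem cannot be replaced by approximation from below.) -/
open Filter

/-!
`J d` differs from `V` by the constant `1 / d`, so it converges to `V` uniformly. But `V` equals `1`
everywhere off `[1, 2]`, i.e. it sits exactly on the boundary of the strict sublevel set there, and
lowering it by any positive amount puts the whole of `Λ` into that set. The gap between the two
sublevel sets is the distance from `-10` to `1`.
-/

section Indicator

variable {α G : Type*} [AddCommGroup G] [PartialOrder G] [IsOrderedAddMonoid G] {a c ε : G}

lemma sub_indicator_const_lt_self_iff (ha : 0 < a) (s : Set α) (x : α) :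
    c - s.indicator (fun _ => a) x < c ↔ x ∈ s := by
  by_cases hx : x ∈ s <;> simp [hx, ha]

lemma sub_indicator_const_sub_lt_self (ha : 0 ≤ a) (hε : 0 < ε) (s : Set α) (x : α) :
    c - s.indicator (fun _ => a) x - ε < c :=
  calc c - s.indicator (fun _ => a) x - ε
      < c - s.indicator (fun _ => a) x := sub_lt_self _ hε
    _ ≤ c := sub_le_self _ (Set.indicator_nonneg (fun _ _ => ha) x)

end Indicator

-- For `x ∉ s` the inner supremum is `sSup ∅`, which is `0` in `ℝ`.
lemma cbiSup_const {α β : Type*} [ConditionallyCompleteLattice β] {s : Set α} (hs : s.Nonempty)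
    {c : β} (hc : sSup ∅ ≤ c) : ⨆ x ∈ s, c = c := by
  have : Nonempty s := hs.to_subtype
  have hsup : ⨆ _ : s, c = c := ciSup_const
  have hbdd : BddAbove (Set.range fun _ : s => c) := ⟨c, by rintro _ ⟨_, rfl⟩; rfl⟩
  exact (ciSup_subtype hbdd (hc.trans_eq hsup.symm)).symm.trans hsup

lemma le_hausdorffDist_of_forall_le_dist {X : Type*} [PseudoMetricSpace X] {s t : Set X}
    (hs : Bornology.IsBounded s) (ht : Bornology.IsBounded t) (hne : t.Nonempty) {x : X}
    (hx : x ∈ s) {r : ℝ} (hr : ∀ y ∈ t, r ≤ dist x y) : r ≤ Metric.hausdorffDist s t :=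
  calc r ≤ Metric.infDist x t := (Metric.le_infDist hne).2 fun {y} => hr y
    _ ≤ Metric.hausdorffDist s t := Metric.infDist_le_hausdorffDist_of_mem hx <|
      Metric.hausdorffEDist_ne_top_of_nonempty_of_bounded ⟨x, hx⟩ hne hs ht

section HausdorffDistIcc

variable {a b c d : ℝ}

lemma exists_mem_Icc_dist_le (hcd : c ≤ d) {x : ℝ} (hx : x ∈ Set.Icc a b) :
    ∃ y ∈ Set.Icc c d, dist x y ≤ max |a - c| |b - d| := by
  obtain ⟨hax, hxb⟩ := hx
  rcases lt_or_ge x c with hxc | hcx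
  · refine ⟨c, Set.left_mem_Icc.2 hcd, le_max_of_le_left ?_⟩
    rw [Real.dist_eq, abs_of_neg (by linarith), abs_of_neg (by linarith)]
    linarith
  rcases le_or_gt x d with hxd | hdx
  · exact ⟨x, ⟨hcx, hxd⟩, by simp⟩
  · refine ⟨d, Set.right_mem_Icc.2 hcd, le_max_of_le_right ?_⟩
    rw [Real.dist_eq, abs_of_pos (by linarith), abs_of_pos (by linarith)]
    linarith

lemma hausdorffDist_Icc_le (hab : a ≤ b) (hcd : c ≤ d) :
    Metric.hausdorffDist (Set.Icc a b) (Set.Icc c d) ≤ max |a - c| |b - d| := by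
  refine Metric.hausdorffDist_le_of_mem_dist (by positivity)
    (fun x hx => exists_mem_Icc_dist_le hcd hx) fun y hy => ?_
  rw [abs_sub_comm a, abs_sub_comm b]
  exact exists_mem_Icc_dist_le hab hy

lemma left_sub_left_le_hausdorffDist_Icc (hab : a ≤ b) (hcd : c ≤ d) :
    c - a ≤ Metric.hausdorffDist (Set.Icc a b) (Set.Icc c d) := by
  refine le_hausdorffDist_of_forall_le_dist (Metric.isBounded_Icc a b) (Metric.isBounded_Icc c d)
    (Set.nonempty_Icc.2 hcd) (Set.left_mem_Icc.2 hab) fun y hy => ?_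
  rw [dist_comm, Real.dist_eq]
  exact (sub_le_sub_right hy.1 a).trans (le_abs_self _)

lemma right_sub_right_le_hausdorffDist_Icc (hab : a ≤ b) (hcd : c ≤ d) :
    b - d ≤ Metric.hausdorffDist (Set.Icc a b) (Set.Icc c d) := by
  refine le_hausdorffDist_of_forall_le_dist (Metric.isBounded_Icc a b) (Metric.isBounded_Icc c d)
    (Set.nonempty_Icc.2 hcd) (Set.right_mem_Icc.2 hab) fun y hy => ?_
  rw [Real.dist_eq]
  exact (sub_le_sub_left hy.2 b).trans (le_abs_self _)

lemma hausdorffDist_Icc (hab : a ≤ b) (hcd : c ≤ d) :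
    Metric.hausdorffDist (Set.Icc a b) (Set.Icc c d) = max |a - c| |b - d| := by
  refine (hausdorffDist_Icc_le hab hcd).antisymm (max_le ?_ ?_)
  · refine abs_sub_le_iff.2 ⟨?_, left_sub_left_le_hausdorffDist_Icc hab hcd⟩
    rw [Metric.hausdorffDist_comm]
    exact left_sub_left_le_hausdorffDist_Icc hcd hab
  · refine abs_sub_le_iff.2 ⟨right_sub_right_le_hausdorffDist_Icc hab hcd, ?_⟩
    rw [Metric.hausdorffDist_comm]
    exact right_sub_right_le_hausdorffDist_Icc hcd hab

end HausdorffDistIcc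

/-- **Counterexample: approximation from below fails for Hausdorff
convergence.** On `Λ = [-10,10]`, with `V = 1 - 𝟙_{[1,2]}` and
`J_d = 1 - 𝟙_{[1,2]} - 1/d`: `J_d ≤ V` on `Λ`, `sup_{x∈Λ} |V - J_d| = 1/d → 0`, yet the
strict `1`-sublevel sets are `[1,2]` and `[-10,10]`, whose Hausdorff distance is `11` for
every `d ≥ 1`, so it does not tend to `0`. -/
theorem statement_13
    (Λ : Set ℝ) (hΛ : Λ = Set.Icc (-10) 10)
    (V : ℝ → ℝ)
    (hV : ∀ x, V x = 1 - Set.indicator (Set.Icc 1 2) (fun _ => (1 : ℝ)) x)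
    (J : ℕ → ℝ → ℝ)
    (hJ : ∀ (d : ℕ) (x : ℝ),
      J d x = 1 - Set.indicator (Set.Icc 1 2) (fun _ => (1 : ℝ)) x - 1 / (d : ℝ)) :
    (∀ d : ℕ, 1 ≤ d → ∀ x ∈ Λ, J d x ≤ V x) ∧
    (∀ d : ℕ, 1 ≤ d → (⨆ x ∈ Λ, |V x - J d x|) = 1 / (d : ℝ)) ∧
    Tendsto (fun d : ℕ => 1 / (d : ℝ)) atTop (nhds 0) ∧
    ({x ∈ Λ | V x < 1} = Set.Icc 1 2) ∧
    (∀ d : ℕ, 1 ≤ d → {x ∈ Λ | J d x < 1} = Set.Icc (-10) 10) ∧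
    (∀ d : ℕ, 1 ≤ d →
      Metric.hausdorffDist {x ∈ Λ | J d x < 1} {x ∈ Λ | V x < 1} = 11) ∧
    ¬ Tendsto (fun d : ℕ =>
        Metric.hausdorffDist {x ∈ Λ | J d x < 1} {x ∈ Λ | V x < 1}) atTop (nhds 0) := by
  have hpos (d : ℕ) (hd : 1 ≤ d) : (0 : ℝ) < 1 / d := one_div_pos.2 (Nat.cast_pos.2 hd)
  have hdiff (d : ℕ) (x : ℝ) : V x - J d x = 1 / d := by rw [hV, hJ, sub_sub_cancel]
  have hVsub : {x ∈ Λ | V x < 1} = Set.Icc 1 2 := by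
    simp only [hV, sub_indicator_const_lt_self_iff one_pos, hΛ]
    exact Set.inter_eq_right.2 (Set.Icc_subset_Icc (by norm_num) (by norm_num))
  have hJsub (d : ℕ) (hd : 1 ≤ d) : {x ∈ Λ | J d x < 1} = Set.Icc (-10) 10 := by
    simp only [hJ, sub_indicator_const_sub_lt_self zero_le_one (hpos d hd), and_true, hΛ,
      Set.ofPred_mem_eq]
  have hdist (d : ℕ) (hd : 1 ≤ d) :
      Metric.hausdorffDist {x ∈ Λ | J d x < 1} {x ∈ Λ | V x < 1} = 11 := by
    rw [hJsub d hd, hVsub, hausdorffDist_Icc (by norm_num) (by norm_num)]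
    norm_num
  refine ⟨fun d hd x _ => ?_, fun d hd => ?_, tendsto_one_div_atTop_nhds_zero_nat, hVsub, hJsub,
    hdist, fun hlim => ?_⟩
  · exact sub_nonneg.1 ((hpos d hd).le.trans_eq (hdiff d x).symm)
  · simp only [hdiff, abs_of_pos (hpos d hd)]
    exact cbiSup_const (hΛ ▸ Set.nonempty_Icc.2 (by norm_num))
      (Real.sSup_empty.trans_le (hpos d hd).le)
  · have heq := (eventually_ge_atTop 1).mono hdist
    exact absurd (tendsto_const_nhds_iff.1 (hlim.congr' heq)) (by norm_num)
end

section
/- Let Λ = [−10, 10] ⊂ ℝ, let V : ℝ → ℝ be V(x) = 1 − 𝟙_{{1/2}}(x) − 𝟙_{[1,2]}(x), and for each integer d ≥ 2 let J_d(x) = 1 − 𝟙_{[1, 2−1/d]}(x). Then: (i) V(x) ≤ J_d(x) for all x ∈ Λ and all d ≥ 2; (ii) ∫_Λ |V(x) − J_d(x)| dx = 1/d, which tends to 0 as d → ∞; (iii) {x ∈ Λ : V(x) < 1} = {1/2} ∪ [1,2] and {x ∈ Λ : J_d(x) < 1} = [1, 2−1/d]; and (iv) the Hausdorff distance D_H({x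 ∈ Λ : V(x) < 1}, {x ∈ Λ : J_d(x) < 1}) = 1/2 for every d ≥ 2, so it does not tend to 0. (This shows that L¹ convergence from above does not suffice for Hausdorff convergence of strict sublevel sets.) -/
open Filter MeasureTheory

/-!
Both functions are indicators of complements: `V = 𝟙_{Sᶜ}` with `S = {1/2} ∪ [1, 2]`, and
`J_d = 𝟙_{T_dᶜ}` with `T_d = [1, 2 - 1/d] ⊆ S`. Hence the strict `1`-sublevel sets are `S` and
`T_d`, and the `L¹` distance is the measure of `S \ T_d`, which does not see the isolated point
`1/2`. The Hausdorff distance does see it: `1/2` stays at distance `1/2` from every `T_d`.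
-/

section Indicator

variable {α M : Type*}

theorem one_sub_indicator_one [AddGroupWithOne M] (s : Set α) (x : α) :
    1 - s.indicator (fun _ => (1 : M)) x = sᶜ.indicator (fun _ => 1) x :=
  sub_eq_of_eq_add (Set.indicator_compl_add_self_apply s (fun _ => (1 : M)) x).symm

theorem one_sub_indicator_one_sub_indicator_one [AddCommGroupWithOne M] {s t : Set α}
    (hst : Disjoint s t) (x : α) :
    1 - s.indicator (fun _ => (1 : M)) x - t.indicator (fun _ => 1) x =
      (s ∪ t)ᶜ.indicator (fun _ => 1) x := by
  rw [← one_sub_indicator_one, Set.indicator_union_of_disjoint hst, sub_sub]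

theorem sep_indicator_compl_one_lt_one [Zero M] [One M] [PartialOrder M] [ZeroLEOneClass M]
    [NeZero (1 : M)] {s Λ : Set α} (hs : s ⊆ Λ) :
    {x ∈ Λ | sᶜ.indicator (fun _ => (1 : M)) x < 1} = s := by
  ext x
  by_cases hx : x ∈ s
  · simp [hx, hs hx]
  · simp [hx]

theorem setIntegral_abs_indicator_compl_one_sub [MeasurableSpace α] {μ : Measure α}
    {s t Λ : Set α} (hs : MeasurableSet s) (ht : MeasurableSet t) (hts : t ⊆ s) (hsΛ : s ⊆ Λ)
    (hμs : μ s ≠ ⊤) :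
    ∫ x in Λ, |sᶜ.indicator (fun _ => (1 : ℝ)) x - tᶜ.indicator (fun _ => 1) x| ∂μ =
      μ.real s - μ.real t := by
  have abs_sub_eq (x : α) :
      |sᶜ.indicator (fun _ => (1 : ℝ)) x - tᶜ.indicator (fun _ => 1) x| =
        (s \ t).indicator 1 x := by
    rw [← Set.abs_indicator_symmDiff, compl_symmDiff_compl, symmDiff_of_ge hts]
    exact abs_of_nonneg (Set.indicator_nonneg (fun _ _ => zero_le_one) x)
  simp only [abs_sub_eq]
  rw [integral_indicator_one (hs.diff ht), measureReal_restrict_apply (hs.diff ht),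
    Set.inter_eq_left.2 (Set.sdiff_subset.trans hsΛ), measureReal_sdiff hts ht hμs]

end Indicator

section Interval

theorem Icc_subset_singleton_union_Icc {α : Type*} [Preorder α] {p a b c : α} (hbc : b ≤ c) :
    Set.Icc a b ⊆ {p} ∪ Set.Icc a c :=
  (Set.Icc_subset_Icc_right hbc).trans Set.subset_union_right

theorem volume_real_singleton_union_Icc (p : ℝ) {a b : ℝ} (hab : a ≤ b) :
    volume.real ({p} ∪ Set.Icc a b) = b - a := by
  rw [Set.singleton_union, measureReal_congr (insert_ae_eq_self p _),
    Real.volume_real_Icc_of_le hab]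

theorem setIntegral_abs_indicator_compl_singleton_union_Icc_sub {p a b c : ℝ} {Λ : Set ℝ}
    (hab : a ≤ b) (hbc : b ≤ c) (hΛ : {p} ∪ Set.Icc a c ⊆ Λ) :
    ∫ x in Λ, |({p} ∪ Set.Icc a c)ᶜ.indicator (fun _ => (1 : ℝ)) x -
      (Set.Icc a b)ᶜ.indicator (fun _ => 1) x| = c - b := by
  have volume_ne_top : volume ({p} ∪ Set.Icc a c) ≠ ⊤ :=
    (Bornology.isBounded_singleton.union (Metric.isBounded_Icc a c)).measure_lt_top.ne
  rw [setIntegral_abs_indicator_compl_one_sub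
      ((measurableSet_singleton p).union measurableSet_Icc) measurableSet_Icc
      (Icc_subset_singleton_union_Icc hbc) hΛ volume_ne_top,
    volume_real_singleton_union_Icc p (hab.trans hbc), Real.volume_real_Icc_of_le hab,
    sub_sub_sub_cancel_right]

theorem infDist_Icc {a b : ℝ} (hab : a ≤ b) (x : ℝ) :
    Metric.infDist x (Set.Icc a b) = max 0 (max (a - x) (x - b)) := by
  apply le_antisymm
  · have nearest_mem : max a (min b x) ∈ Set.Icc a b :=
      ⟨le_max_left _ _, max_le hab (min_le_left _ _)⟩
    refine (Metric.infDist_le_dist_of_mem nearest_mem).trans ?_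
    rw [Real.dist_eq]
    grind
  · rw [Metric.le_infDist (Set.nonempty_Icc.2 hab)]
    rintro y ⟨hay, hyb⟩
    rw [Real.dist_eq]
    grind

theorem hausdorffDist_singleton_union_Icc_Icc {p a b c : ℝ} (hpa : p ≤ a) (hab : a ≤ b)
    (hbc : b ≤ c) :
    Metric.hausdorffDist ({p} ∪ Set.Icc a c) (Set.Icc a b) = max (a - p) (c - b) := by
  apply le_antisymm
  · refine Metric.hausdorffDist_le_of_infDist (le_max_of_le_left (sub_nonneg.2 hpa)) ?_ ?_
    · rintro x (rfl | ⟨hax, hxc⟩) <;> rw [infDist_Icc hab] <;> grind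
    · intro x hx
      rw [Metric.infDist_zero_of_mem (Icc_subset_singleton_union_Icc hbc hx)]
      exact le_max_of_le_left (sub_nonneg.2 hpa)
  · have edist_ne_top : Metric.hausdorffEDist ({p} ∪ Set.Icc a c) (Set.Icc a b) ≠ ⊤ :=
      Metric.hausdorffEDist_ne_top_of_nonempty_of_bounded ⟨p, Or.inl rfl⟩
        (Set.nonempty_Icc.2 hab)
        (Bornology.isBounded_singleton.union (Metric.isBounded_Icc a c))
        (Metric.isBounded_Icc a b)
    have infDist_le {x : ℝ} (hx : x ∈ ({p} ∪ Set.Icc a c : Set ℝ)) :=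
      Metric.infDist_le_hausdorffDist_of_mem hx edist_ne_top
    simp only [infDist_Icc hab, max_le_iff] at infDist_le
    exact max_le (infDist_le (Or.inl rfl)).2.1
      (infDist_le (Or.inr ⟨hab.trans hbc, le_rfl⟩)).2.2

end Interval

/-- **Counterexample: `L¹` convergence from above does not give Hausdorff
convergence.** On `Λ = [-10,10]`, with `V = 1 - 𝟙_{{1/2}} - 𝟙_{[1,2]}` and
`J_d = 1 - 𝟙_{[1,2-1/d]}`: `V ≤ J_d` on `Λ`, `∫_Λ |V - J_d| = 1/d → 0`, the strict
`1`-sublevel sets are `{1/2} ∪ [1,2]` and `[1, 2-1/d]`, and their Hausdorff distance is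
`1/2` for every `d ≥ 2`, so it does not tend to `0`. -/
theorem statement_14
    (Λ : Set ℝ) (hΛ : Λ = Set.Icc (-10) 10)
    (V : ℝ → ℝ)
    (hV : ∀ x, V x = 1 - Set.indicator {(1/2 : ℝ)} (fun _ => (1 : ℝ)) x
      - Set.indicator (Set.Icc 1 2) (fun _ => (1 : ℝ)) x)
    (J : ℕ → ℝ → ℝ)
    (hJ : ∀ (d : ℕ) (x : ℝ),
      J d x = 1 - Set.indicator (Set.Icc 1 (2 - 1 / (d : ℝ))) (fun _ => (1 : ℝ)) x) :
    (∀ d : ℕ, 2 ≤ d → ∀ x ∈ Λ, V x ≤ J d x) ∧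
    (∀ d : ℕ, 2 ≤ d → (∫ x in Λ, |V x - J d x|) = 1 / (d : ℝ)) ∧
    Tendsto (fun d : ℕ => 1 / (d : ℝ)) atTop (nhds 0) ∧
    ({x ∈ Λ | V x < 1} = {(1/2 : ℝ)} ∪ Set.Icc 1 2) ∧
    (∀ d : ℕ, 2 ≤ d → {x ∈ Λ | J d x < 1} = Set.Icc 1 (2 - 1 / (d : ℝ))) ∧
    (∀ d : ℕ, 2 ≤ d →
      Metric.hausdorffDist {x ∈ Λ | V x < 1} {x ∈ Λ | J d x < 1} = 1 / 2) ∧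
    ¬ Tendsto (fun d : ℕ =>
        Metric.hausdorffDist {x ∈ Λ | V x < 1} {x ∈ Λ | J d x < 1}) atTop (nhds 0) := by
  obtain rfl : V = ({1 / 2} ∪ Set.Icc 1 2)ᶜ.indicator fun _ => 1 :=
    funext fun x => (hV x).trans (one_sub_indicator_one_sub_indicator_one (by norm_num) x)
  obtain rfl : J = fun d : ℕ => (Set.Icc 1 (2 - 1 / (d : ℝ)))ᶜ.indicator fun _ => 1 :=
    funext₂ fun d x => (hJ d x).trans (one_sub_indicator_one _ x)
  have le_half {d : ℕ} (hd : 2 ≤ d) : 1 / (d : ℝ) ≤ 1 / 2 :=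
    one_div_le_one_div_of_le two_pos (Nat.ofNat_le_cast.2 hd)
  have le_two (d : ℕ) : 2 - 1 / (d : ℝ) ≤ 2 := sub_le_self 2 (by positivity)
  have subset_Λ : {1 / 2} ∪ Set.Icc 1 2 ⊆ Λ :=
    hΛ ▸ Set.union_subset (by norm_num) (Set.Icc_subset_Icc (by norm_num) (by norm_num))
  have sublevel_V := sep_indicator_compl_one_lt_one (M := ℝ) subset_Λ
  have sublevel_J (d : ℕ) := sep_indicator_compl_one_lt_one (M := ℝ)
    ((Icc_subset_singleton_union_Icc (le_two d)).trans subset_Λ)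
  have hausdorffDist_eq (d : ℕ) (hd : 2 ≤ d) :
      Metric.hausdorffDist ({1 / 2} ∪ Set.Icc 1 2) (Set.Icc 1 (2 - 1 / (d : ℝ))) = 1 / 2 := by
    rw [hausdorffDist_singleton_union_Icc_Icc (by norm_num) (by linarith [le_half hd]) (le_two d),
      sub_sub_cancel, sub_half, max_eq_left (le_half hd)]
  refine ⟨fun d _ x _ => ?_, fun d hd => ?_, tendsto_one_div_atTop_nhds_zero_nat, sublevel_V,
    fun d _ => sublevel_J d, ?_, ?_⟩
  · exact Set.indicator_le_indicator_of_subset (Set.compl_subset_compl.2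
      (Icc_subset_singleton_union_Icc (le_two d))) (fun _ => zero_le_one) x
  · rw [setIntegral_abs_indicator_compl_singleton_union_Icc_sub (by linarith [le_half hd])
      (le_two d) subset_Λ, sub_sub_cancel]
  · simpa only [sublevel_V, sublevel_J] using hausdorffDist_eq
  · simp only [sublevel_V, sublevel_J]
    rw [tendsto_congr' ((eventually_ge_atTop 2).mono hausdorffDist_eq), tendsto_const_nhds_iff]
    norm_num
end

section
/- Let Λ = [0, ∞) ⊂ ℝ (a closed but non-compact set), let V(x) = −e^{−x}, and for each integer d ≥ 1 let J_d(x) = 1/d − e^{−x}. Then: (i) V(x) ≤ J_d(x) for all x ∈ Λ and all d ≥ 1; (ii) sup_{x∈Λ} |V(x) − J_d(x)| = 1/d, which tends to 0 as d → ∞; (iii) {x ∈ Λ : V(x) < 0} = [0, ∞) and {x ∈ Λ : J_d(x) < 0} = [0, ln d); and (iv) the extended Hausdorff distance (EMetric.hausdorffEdist) between {x ∈ Λ : J_d(x) < 0} and {x ∈ Λ : V(x) < 0} equals ∞ for every d ≥ 1, so it does not tend to 0. (This shows that compactness of Λ cannot be dropped from the Hausdorff sublevel-set convergence theorem.) -/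
open Filter

/-!
Adding the constant `1 / d` to `-e^{-x}` is a uniformly small perturbation, but `-e^{-x}` itself
tends to `0` at infinity, so the perturbation cuts the strict `0`-sublevel set down from an
unbounded half-line to a bounded interval. A bounded set is at infinite Hausdorff distance from an
unbounded one.
-/

section HausdorffDistance

variable {α : Type*} [PseudoMetricSpace α] {s t : Set α}

theorem isBounded_of_hausdorffEDist_ne_top (hs : Bornology.IsBounded s)
    (hst : Metric.hausdorffEDist s t ≠ ⊤) : Bornology.IsBounded t := by
  obtain ⟨δ, hδ⟩ := ENNReal.lt_iff_exists_nnreal_btwn.1 hst.lt_top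
  have ht : t ⊆ Metric.thickening δ s := fun x hx => by
    obtain ⟨y, hy, hxy⟩ := Metric.exists_edist_lt_of_hausdorffEDist_lt hx
      (Metric.hausdorffEDist_comm.trans_lt hδ.1)
    exact Metric.mem_thickening_iff.2 ⟨y, hy, edist_lt_coe.1 hxy⟩
  exact hs.thickening.subset ht

theorem hausdorffEDist_eq_top_of_isBounded_of_not_isBounded (hs : Bornology.IsBounded s)
    (ht : ¬Bornology.IsBounded t) : Metric.hausdorffEDist s t = ⊤ :=
  not_ne_iff.1 fun hst => ht (isBounded_of_hausdorffEDist_ne_top hs hst)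

end HausdorffDistance

theorem hausdorffEDist_Ico_Ici_eq_top (a b c : ℝ) :
    Metric.hausdorffEDist (Set.Ico a b) (Set.Ici c) = ⊤ :=
  hausdorffEDist_eq_top_of_isBounded_of_not_isBounded (Metric.isBounded_Ico a b)
    fun h => not_bddAbove_Ici c h.bddAbove

-- For `i ∉ s` the inner supremum has the junk value `sSup ∅ = 0`.
theorem real_biSup_const {ι : Type*} {s : Set ι} (hs : s.Nonempty) {c : ℝ} (hc : 0 ≤ c) :
    (⨆ i ∈ s, c) = c := by
  obtain ⟨i, hi⟩ := hs
  have inner_le (j : ι) : (⨆ _ : j ∈ s, c) ≤ c := Real.iSup_le (fun _ => le_rfl) hc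
  have bddAbove : BddAbove (Set.range fun j => ⨆ _ : j ∈ s, c) :=
    ⟨c, Set.forall_mem_range.2 inner_le⟩
  exact le_antisymm (Real.iSup_le inner_le hc)
    (le_ciSup_of_le bddAbove i (ciSup_pos (f := fun _ => c) hi).ge)

theorem sep_Ici_neg_exp_neg_lt_zero (a : ℝ) :
    {x ∈ Set.Ici a | -Real.exp (-x) < 0} = Set.Ici a :=
  Set.sep_eq_self_iff_mem_true.2 fun x _ => neg_neg_of_pos (Real.exp_pos (-x))

theorem sep_Ici_sub_exp_neg_lt_zero (a : ℝ) {c : ℝ} (hc : 0 < c) :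
    {x ∈ Set.Ici a | c - Real.exp (-x) < 0} = Set.Ico a (-Real.log c) := by
  ext x
  have sub_exp_neg_lt_zero_iff : c - Real.exp (-x) < 0 ↔ x < -Real.log c := by
    rw [sub_neg, ← Real.log_lt_iff_lt_exp hc, lt_neg]
  exact and_congr_right' sub_exp_neg_lt_zero_iff

/-- **Counterexample: compactness of `Λ` cannot be dropped.**
On the non-compact set `Λ = [0,∞)`, with `V x = -e^{-x}` and `J_d x = 1/d - e^{-x}`:
`V ≤ J_d` on `Λ`, `sup_{x∈Λ} |V - J_d| = 1/d → 0`, the strict `0`-sublevel sets are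
`[0,∞)` and `[0, ln d)`, and their extended Hausdorff distance is `∞` for every `d ≥ 1`,
so it does not tend to `0`. -/
theorem statement_16
    (Λ : Set ℝ) (hΛ : Λ = Set.Ici 0)
    (V : ℝ → ℝ) (hV : ∀ x, V x = -Real.exp (-x))
    (J : ℕ → ℝ → ℝ)
    (hJ : ∀ (d : ℕ) (x : ℝ), J d x = 1 / (d : ℝ) - Real.exp (-x)) :
    (∀ d : ℕ, 1 ≤ d → ∀ x ∈ Λ, V x ≤ J d x) ∧
    (∀ d : ℕ, 1 ≤ d → (⨆ x ∈ Λ, |V x - J d x|) = 1 / (d : ℝ)) ∧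
    Tendsto (fun d : ℕ => 1 / (d : ℝ)) atTop (nhds 0) ∧
    ({x ∈ Λ | V x < 0} = Set.Ici 0) ∧
    (∀ d : ℕ, 1 ≤ d → {x ∈ Λ | J d x < 0} = Set.Ico 0 (Real.log d)) ∧
    (∀ d : ℕ, 1 ≤ d →
      EMetric.hausdorffEdist {x ∈ Λ | J d x < 0} {x ∈ Λ | V x < 0} = ⊤) ∧
    ¬ Tendsto (fun d : ℕ =>
        EMetric.hausdorffEdist {x ∈ Λ | J d x < 0} {x ∈ Λ | V x < 0}) atTop (nhds 0) := by
  subst hΛ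
  have J_eq (d : ℕ) (x : ℝ) : J d x = V x + 1 / d := by rw [hJ, hV]; ring
  have one_div_d_nonneg (d : ℕ) : (0 : ℝ) ≤ 1 / d := Nat.one_div_cast_nonneg d
  have abs_sub_eq (d : ℕ) (x : ℝ) : |V x - J d x| = 1 / d := by
    rw [J_eq, sub_add_cancel_left, abs_neg, abs_of_nonneg (one_div_d_nonneg d)]
  have sublevel_V : {x ∈ Set.Ici 0 | V x < 0} = Set.Ici 0 := by
    simpa only [hV] using sep_Ici_neg_exp_neg_lt_zero 0
  have sublevel_J (d : ℕ) (hd : 1 ≤ d) : {x ∈ Set.Ici 0 | J d x < 0} = Set.Ico 0 (Real.log d) := by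
    simpa only [hJ, one_div, Real.log_inv, neg_neg] using
      sep_Ici_sub_exp_neg_lt_zero 0 (Nat.one_div_cast_pos (α := ℝ) (Nat.one_le_iff_ne_zero.1 hd))
  have edist_eq_top (d : ℕ) (hd : 1 ≤ d) :
      Metric.hausdorffEDist {x ∈ Set.Ici 0 | J d x < 0} {x ∈ Set.Ici 0 | V x < 0} = ⊤ := by
    rw [sublevel_V, sublevel_J d hd]
    exact hausdorffEDist_Ico_Ici_eq_top 0 (Real.log d) 0
  refine ⟨fun d _ x _ => ?_, fun d _ => ?_, tendsto_one_div_atTop_nhds_zero_nat, sublevel_V,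
    sublevel_J, edist_eq_top, fun h => ?_⟩
  · exact (le_add_of_nonneg_right (one_div_d_nonneg d)).trans_eq (J_eq d x).symm
  · simpa only [abs_sub_eq] using real_biSup_const Set.nonempty_Ici (one_div_d_nonneg d)
  · exact ENNReal.zero_ne_top (tendsto_nhds_unique_of_eventuallyEq h tendsto_const_nhds
      ((eventually_ge_atTop 1).mono edist_eq_top))
end
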